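/- arXiv:2102.08448 — 3 statements merged into one kernel-verified Lean document; each statement's English description precedes it below -/
import Mathlib

section
/- The set of matrices A ∈ Sp(2n, ℝ) whose characteristic polynomial has 2n pairwise distinct complex roots (equivalently, whose characteristic polynomial is separable) is open and dense in Sp(2n, ℝ). -/
open Matrix

/-- The standard symplectic matrix `J = [[0, Iₙ], [−Iₙ, 0]]` on `ℝ^{2n}`,
indexed by `Fin (2 * n)`. -/
noncomputable def stdJ (n : ℕ) : Matrix (Fin (2 * n)) (Fin (2 * n)) ℝ :=
  Matrix.of fun i j =>
    if (j : ℕ) = (i : ℕ) + n then 1 else if (i : ℕ) = (j : ℕ) + n then -1 else 0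

/-- The symplectic group `Sp(2n, ℝ)` as a subtype of matrices, with the subspace
topology inherited from the space of real `2n × 2n` matrices. -/
abbrev SpMat (n : ℕ) : Type :=
  {M : Matrix (Fin (2 * n)) (Fin (2 * n)) ℝ // Mᵀ * stdJ n * M = stdJ n}
open Polynomial in
/-- The resultant of the characteristic polynomial and its derivative. -/
noncomputable def rs {m R : Type*} [Fintype m] [DecidableEq m] [CommRing R]
    (M : Matrix m m R) : R :=
  resultant M.charpoly (derivative M.charpoly) (Fintype.card m) (Fintype.card m - 1)

/-- The characteristic polynomial has distinct complex roots. -/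
def Good {m : Type*} [Fintype m] [DecidableEq m] (M : Matrix m m ℝ) : Prop :=
  ((M.charpoly.map (algebraMap ℝ ℂ)).roots).Nodup

section
variable {m : Type*} [Fintype m] [DecidableEq m]

theorem rs_map {R S : Type*} [CommRing R] [CommRing S] (M : Matrix m m R) (f : R →+* S) :
    rs (M.map f) = f (rs M) := by
  unfold rs
  rw [Matrix.charpoly_map, Polynomial.derivative_map, Polynomial.resultant_map_map]

theorem good_iff (M : Matrix m m ℝ) : Good M ↔ rs M ≠ 0 := by
  unfold Good rs
  have hm := M.charpoly_monic
  rw [Polynomial.nodup_roots_iff_of_splits (Polynomial.map_ne_zero hm.ne_zero)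
    (IsAlgClosed.splits _), Polynomial.separable_map, Polynomial.Separable,
    ← Polynomial.isUnit_resultant_iff_isCoprime hm, isUnit_iff_ne_zero,
    Matrix.charpoly_natDegree_eq_dim]
  have : (Polynomial.derivative M.charpoly).natDegree = Fintype.card m - 1 := by
    rw [← M.charpoly_natDegree_eq_dim]
    exact Polynomial.natDegree_derivative M.charpoly
  rw [this]

theorem continuous_rs : Continuous (fun M : Matrix m m ℝ => rs M) := by
  have : (fun M : Matrix m m ℝ => rs M) = fun M : Matrix m m ℝ =>
      MvPolynomial.eval (fun p : m × m => M p.1 p.2) (rs (Matrix.mvPolynomialX m m ℝ)) := by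
    funext M
    rw [← rs_map]
    congr 1
    exact (Matrix.mvPolynomialX_mapMatrix_eval M).symm
  rw [this]
  refine (MvPolynomial.continuous_eval _).comp ?_
  fun_prop

theorem isOpen_good : IsOpen {M : Matrix m m ℝ | Good M} := by
  simp only [good_iff]
  exact isOpen_ne_fun continuous_rs continuous_const

theorem good_of_smul {c : ℝ} (hc : c ≠ 0) {M : Matrix m m ℝ} (h : Good (c • M)) : Good M := by
  unfold Good at *
  have key : ((c • M).charpoly).comp (Polynomial.C c * Polynomial.X + Polynomial.C 0)
      = Polynomial.C (c ^ Fintype.card m) * M.charpoly := by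
    apply Polynomial.funext
    intro t
    rw [Polynomial.eval_comp, Matrix.eval_charpoly, Polynomial.eval_mul, Matrix.eval_charpoly,
      Polynomial.eval_C, ← Matrix.det_smul]
    congr 1
    ext i j
    by_cases hij : i = j <;> simp [hij, mul_sub]
  have key2 := congrArg (Polynomial.map (algebraMap ℝ ℂ)) key
  rw [Polynomial.map_comp, Polynomial.map_mul, Polynomial.map_C] at key2
  have hc' : IsUnit (algebraMap ℝ ℂ c) := by simpa using hc
  have h3 := congrArg Polynomial.roots key2
  rw [Polynomial.roots_C_mul _ (by simpa using fun h => absurd h hc)] at h3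
  rw [← h3]
  simp only [Polynomial.map_add, Polynomial.map_mul, Polynomial.map_C, Polynomial.map_X]
  rw [Polynomial.roots_comp_C_mul_X_add_C _ _ _ hc']
  refine h.map ?_
  intro x y hxy
  simpa [hc] using hxy

theorem good_smul_iff {c : ℝ} (hc : c ≠ 0) {M : Matrix m m ℝ} : Good (c • M) ↔ Good M := by
  refine ⟨good_of_smul hc, fun h => ?_⟩
  apply good_of_smul (inv_ne_zero hc)
  rwa [smul_smul, inv_mul_cancel₀ hc, one_smul]

theorem good_diagonal {d : m → ℝ} (hd : Function.Injective d) : Good (Matrix.diagonal d) := by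
  unfold Good
  rw [Matrix.charpoly_diagonal, Polynomial.map_prod]
  simp only [Polynomial.map_sub, Polynomial.map_X, Polynomial.map_C]
  have := Polynomial.roots_multiset_prod_X_sub_C
    ((Finset.univ : Finset m).val.map (fun i => algebraMap ℝ ℂ (d i)))
  rw [Multiset.map_map] at this
  change (Polynomial.roots (Multiset.prod (Multiset.map _ _))).Nodup
  erw [this]
  refine Finset.univ.nodup.map ?_
  intro x y hxy
  exact hd (by simpa using hxy)

end

section
variable {l : Type*} [Fintype l] [DecidableEq l]

open SymplecticGroup

/-- The numerator of the path. -/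
noncomputable def pathN {R : Type*} [CommRing R] (x : R) (Y A Z : Matrix l l R) :
    Matrix (l ⊕ l) (l ⊕ l) R :=
  fromBlocks 1 (-(x • (1 : Matrix l l R))) 0 1 * fromBlocks 1 0 Y 1 *
    fromBlocks (A.det • A) 0 0 (A.adjugateᵀ) * fromBlocks 1 Z 0 1

/-- The symplectic path. -/
noncomputable def pathM (x : ℝ) (Y A Z : Matrix l l ℝ) : Matrix (l ⊕ l) (l ⊕ l) ℝ :=
  A.det⁻¹ • pathN x Y A Z

theorem pathN_map {R S : Type*} [CommRing R] [CommRing S] (f : R →+* S)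
    (x : R) (Y A Z : Matrix l l R) :
    (pathN x Y A Z).map f = pathN (f x) (Y.map f) (A.map f) (Z.map f) := by
  have h1 : (A.adjugate).map f = (A.map f).adjugate := RingHom.map_adjugate f A
  have h2 : (A.map f).det = f A.det := (RingHom.map_det f A).symm
  unfold pathN
  have h0 : (0 : Matrix l l R).map f = 0 := by simp
  have hone : (1 : Matrix l l R).map f = 1 := by simp
  have hx : (-(x • (1 : Matrix l l R))).map f = -(f x • (1 : Matrix l l S)) := by
    ext i j
    by_cases hij : i = j <;> simp [hij]
  have hd : (A.det • A).map f = f A.det • A.map f := by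
    ext i j
    simp
  simp only [Matrix.map_mul, fromBlocks_map, transpose_map, h1, h2, h0, hone, hx, hd]

theorem pathM_eq {x : ℝ} {Y A Z : Matrix l l ℝ} (hA : A.det ≠ 0) :
    pathM x Y A Z = fromBlocks 1 (-(x • (1 : Matrix l l ℝ))) 0 1 * fromBlocks 1 0 Y 1 *
    fromBlocks A 0 0 (A⁻¹ᵀ) * fromBlocks 1 Z 0 1 := by
  unfold pathM pathN
  rw [← Matrix.smul_mul, ← Matrix.mul_smul, fromBlocks_smul]
  congr 3
  · rw [smul_smul, inv_mul_cancel₀ hA, one_smul]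
  · simp
  · simp
  · rw [Matrix.inv_def, Ring.inverse_eq_inv', transpose_smul]

theorem pathM_mem {x : ℝ} {Y A Z : Matrix l l ℝ} (hA : A.det ≠ 0) (hY : Yᵀ = Y) (hZ : Zᵀ = Z) :
    pathM x Y A Z ∈ symplecticGroup l ℝ := by
  rw [pathM_eq hA]
  have hu : IsUnit A.det := hA.isUnit
  refine mul_mem (mul_mem (mul_mem ?_ ?_) ?_) ?_ <;> rw [fromBlocks_mem_iff]
  · simp
  · simp [hY]
  · simp [← transpose_mul, Matrix.nonsing_inv_mul _ hu]
  · simp [hZ]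

/-- For a symplectic matrix, some real `x` makes `A + x C` invertible. -/
theorem exists_x {A C : Matrix l l ℝ} (hker : ∀ v : l → ℝ, A *ᵥ v = 0 → C *ᵥ v = 0 → v = 0)
    (hs : Aᵀ * C = Cᵀ * A) : ∃ x : ℝ, (A + x • C).det ≠ 0 := by
  by_contra! hcon
  let P : Polynomial ℝ := (A.map Polynomial.C + (Polynomial.X : Polynomial ℝ) • C.map Polynomial.C).det
  have hP : P = 0 := by
    apply Polynomial.funext
    intro t
    rw [Polynomial.eval_zero, ← hcon t, ← Polynomial.coe_evalRingHom, RingHom.map_det]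
    congr 1
    ext i j
    simp
    ring
  have h2 : (A.map (algebraMap ℝ ℂ) + Complex.I • C.map (algebraMap ℝ ℂ)).det = 0 := by
    have : Polynomial.eval₂RingHom (algebraMap ℝ ℂ) Complex.I P = 0 := by rw [hP, map_zero]
    rw [← this, RingHom.map_det]
    congr 1
    ext i j
    simp
    ring
  obtain ⟨v, hv0, hv⟩ := Matrix.exists_mulVec_eq_zero_iff.2 h2
  -- split into real and imaginary parts
  let a : l → ℝ := fun i => (v i).re
  let b : l → ℝ := fun i => (v i).im
  have hre : A *ᵥ a = C *ᵥ b := by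
    funext i
    have := congrArg Complex.re (congrFun hv i)
    simp [Matrix.mulVec, dotProduct, add_mul, Finset.sum_add_distrib] at this
    simp only [Matrix.mulVec, dotProduct, a, b]
    linarith
  have him : A *ᵥ b = - (C *ᵥ a) := by
    funext i
    have := congrArg Complex.im (congrFun hv i)
    simp [Matrix.mulVec, dotProduct, add_mul, Finset.sum_add_distrib] at this
    simp only [Matrix.mulVec, dotProduct, a, b, Pi.neg_apply]
    linarith
  have hsym : ∀ u w : l → ℝ, (A *ᵥ u) ⬝ᵥ (C *ᵥ w) = (C *ᵥ u) ⬝ᵥ (A *ᵥ w) := by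
    intro u w
    rw [← Matrix.vecMul_transpose A u, ← Matrix.dotProduct_mulVec, Matrix.mulVec_mulVec, hs,
      ← Matrix.vecMul_transpose C u, ← Matrix.dotProduct_mulVec, Matrix.mulVec_mulVec]
  have h0 : (A *ᵥ a) ⬝ᵥ (A *ᵥ a) + (C *ᵥ a) ⬝ᵥ (C *ᵥ a) = 0 := by
    have e1 : (A *ᵥ a) ⬝ᵥ (A *ᵥ a) = (A *ᵥ a) ⬝ᵥ (C *ᵥ b) := by rw [← hre]
    have e2 : (C *ᵥ a) ⬝ᵥ (A *ᵥ b) = - ((C *ᵥ a) ⬝ᵥ (C *ᵥ a)) := by rw [him, dotProduct_neg]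
    rw [e1, hsym, e2]; ring
  have h0' : (A *ᵥ b) ⬝ᵥ (A *ᵥ b) + (C *ᵥ b) ⬝ᵥ (C *ᵥ b) = 0 := by
    have e1 : (C *ᵥ b) ⬝ᵥ (C *ᵥ b) = (C *ᵥ b) ⬝ᵥ (A *ᵥ a) := by rw [← hre]
    have e2 : (A *ᵥ b) ⬝ᵥ (A *ᵥ b) = - ((A *ᵥ b) ⬝ᵥ (C *ᵥ a)) := by
      nth_rw 2 [him]; rw [dotProduct_neg]
    rw [e1, e2, hsym]; ring
  have nn : ∀ w : l → ℝ, 0 ≤ w ⬝ᵥ w := fun w => Finset.sum_nonneg fun i _ => mul_self_nonneg _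
  have z : ∀ w : l → ℝ, w ⬝ᵥ w = 0 → w = 0 := fun w h => dotProduct_self_eq_zero.1 h
  have ha : a = 0 := hker a (z _ (by linarith [nn (A *ᵥ a), nn (C *ᵥ a)]))
    (z _ (by linarith [nn (A *ᵥ a), nn (C *ᵥ a)]))
  have hb : b = 0 := hker b (z _ (by linarith [nn (A *ᵥ b), nn (C *ᵥ b)]))
    (z _ (by linarith [nn (A *ᵥ b), nn (C *ᵥ b)]))
  apply hv0
  funext i
  exact Complex.ext (congrFun ha i) (congrFun hb i)

/-- Every symplectic matrix has the form `pathM`. -/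
theorem exists_decomp {M : Matrix (l ⊕ l) (l ⊕ l) ℝ} (hM : M ∈ symplecticGroup l ℝ) :
    ∃ (x : ℝ) (Y A Z : Matrix l l ℝ), A.det ≠ 0 ∧ Yᵀ = Y ∧ Zᵀ = Z ∧ M = pathM x Y A Z := by
  obtain ⟨A, B, C, D, rfl⟩ : ∃ A B C D, M = fromBlocks A B C D :=
    ⟨_, _, _, _, (fromBlocks_toBlocks M).symm⟩
  obtain ⟨h1, h2, h3⟩ := fromBlocks_mem_iff.1 hM
  have hker : ∀ v : l → ℝ, A *ᵥ v = 0 → C *ᵥ v = 0 → v = 0 := by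
    intro v hA hC
    have h4 : Dᵀ * A - Bᵀ * C = 1 := by
      have := congrArg transpose h3
      simpa using this
    have := congrArg (· *ᵥ v) h4
    simpa [Matrix.sub_mulVec, ← Matrix.mulVec_mulVec, hA, hC] using this.symm
  obtain ⟨x, hx⟩ := exists_x hker h1
  have hu : IsUnit (A + x • C).det := hx.isUnit
  set A' := A + x • C with hA'
  set B' := B + x • D with hB'
  have g1 : A'ᵀ * C = Cᵀ * A' := by
    simp [hA', Matrix.add_mul, Matrix.mul_add, h1]
  have g2 : B'ᵀ * D = Dᵀ * B' := by
    simp [hB', Matrix.add_mul, Matrix.mul_add, h2]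
  have g3 : A'ᵀ * D - Cᵀ * B' = 1 := by
    rw [← h3]
    simp [hA', hB', Matrix.add_mul, Matrix.mul_add]
  clear_value A' B'
  have hut : IsUnit A'ᵀ.det := by rwa [det_transpose]
  have hY : (C * A'⁻¹)ᵀ = C * A'⁻¹ := by
    rw [transpose_mul, transpose_nonsing_inv]
    calc A'ᵀ⁻¹ * Cᵀ = A'ᵀ⁻¹ * (Cᵀ * A') * A'⁻¹ := by
          rw [Matrix.mul_assoc, Matrix.mul_nonsing_inv_cancel_right _ _ hu]
      _ = C * A'⁻¹ := by
          rw [← g1, Matrix.nonsing_inv_mul_cancel_left _ _ hut]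
  have hD : D - C * A'⁻¹ * B' = A'⁻¹ᵀ := by
    rw [← hY, transpose_mul, Matrix.mul_assoc, transpose_nonsing_inv]
    calc D - A'ᵀ⁻¹ * (Cᵀ * B') = A'ᵀ⁻¹ * (A'ᵀ * D - Cᵀ * B') := by
          rw [Matrix.mul_sub, Matrix.nonsing_inv_mul_cancel_left _ _ hut]
      _ = A'ᵀ⁻¹ := by rw [g3, Matrix.mul_one]
  have hZ : (A'⁻¹ * B')ᵀ = A'⁻¹ * B' := by
    have e : D = A'⁻¹ᵀ + (C * A'⁻¹) * B' := by rw [← hD]; simp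
    have e2 := g2
    rw [e, Matrix.mul_add, transpose_add, Matrix.add_mul, transpose_transpose, transpose_mul _ B',
      hY, ← Matrix.mul_assoc B'ᵀ] at e2
    rw [transpose_mul]
    simpa using e2
  refine ⟨x, C * A'⁻¹, A', A'⁻¹ * B', hx, hY, hZ, ?_⟩
  rw [pathM_eq hx]
  simp only [fromBlocks_multiply, Matrix.mul_one, Matrix.one_mul, Matrix.mul_zero, Matrix.zero_mul,
    add_zero, zero_add, Matrix.nonsing_inv_mul_cancel_right _ _ hu]
  have e : (C * A'⁻¹) * A' = C := Matrix.nonsing_inv_mul_cancel_right _ _ hu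
  have e' : A' * (A'⁻¹ * B') = B' := Matrix.mul_nonsing_inv_cancel_left _ _ hu
  have e4 : C * (A'⁻¹ * B') + A'⁻¹ᵀ = D := by rw [← hD, ← Matrix.mul_assoc]; abel
  simp only [Matrix.add_mul, e, e', Matrix.neg_mul, Matrix.smul_mul, Matrix.one_mul,
    Matrix.mul_assoc C, fromBlocks_inj]
  refine ⟨?_, ?_, ?_, e4.symm⟩
  · rw [hA']
    abel
  · have e5 := congrArg (fun W => B + x • W) e4
    simp only [← hB', smul_add] at e5
    refine (eq_sub_of_add_eq e5).trans ?_
    abel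
  · trivial

end

section
variable {n : ℕ}

/-- The reference diagonal matrix. -/
noncomputable def refD (n : ℕ) : Matrix (Fin n) (Fin n) ℝ :=
  diagonal fun i => ((i : ℕ) : ℝ) + 2

theorem refD_det : (refD n).det ≠ 0 := by
  rw [refD, det_diagonal, Finset.prod_ne_zero_iff]
  intro i _
  positivity

theorem refD_inv : (refD n)⁻¹ = diagonal fun i : Fin n => (((i : ℕ) : ℝ) + 2)⁻¹ := by
  apply Matrix.inv_eq_right_inv
  rw [refD, diagonal_mul_diagonal, ← diagonal_one]
  congr 1
  funext i
  have : (((i : ℕ) : ℝ) + 2) ≠ 0 := by positivity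
  field_simp

theorem good_ref : Good (pathN 0 0 (refD n) 0) := by
  have h : Good (pathM 0 0 (refD n) 0) := by
    rw [pathM_eq refD_det]
    have : fromBlocks (refD n) 0 0 (refD n)⁻¹ᵀ = diagonal (Sum.elim (fun i : Fin n => ((i : ℕ) : ℝ) + 2)
        (fun i : Fin n => (((i : ℕ) : ℝ) + 2)⁻¹)) := by
      rw [refD_inv, diagonal_transpose, refD, fromBlocks_diagonal]
    rw [this]
    simp only [zero_smul, neg_zero, fromBlocks_one, Matrix.one_mul, Matrix.mul_one]
    apply good_diagonal
    have lt1 : ∀ i : Fin n, (((i : ℕ) : ℝ) + 2)⁻¹ < 1 := fun i =>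
      inv_lt_one_of_one_lt₀ (by have : (0 : ℝ) ≤ (i : ℕ) := by positivity
                                linarith)
    have gt1 : ∀ i : Fin n, 1 < (((i : ℕ) : ℝ) + 2) := fun i => by
      have : (0 : ℝ) ≤ (i : ℕ) := by positivity
      linarith
    rintro (i | i) (j | j) hij
    · simp only [Sum.elim_inl, add_left_inj, Nat.cast_inj] at hij
      rw [Fin.ext hij]
    · simp only [Sum.elim_inl, Sum.elim_inr] at hij
      linarith [lt1 j, gt1 i]
    · simp only [Sum.elim_inl, Sum.elim_inr] at hij
      linarith [lt1 i, gt1 j]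
    · simp only [Sum.elim_inr, _root_.inv_inj, add_left_inj, Nat.cast_inj] at hij
      rw [Fin.ext hij]
  exact (good_smul_iff (inv_ne_zero refD_det)).1 h

open Filter Topology in
theorem exists_path {M : Matrix (Fin n ⊕ Fin n) (Fin n ⊕ Fin n) ℝ}
    (hM : M ∈ symplecticGroup (Fin n) ℝ) :
    ∃ γ : ℝ → Matrix (Fin n ⊕ Fin n) (Fin n ⊕ Fin n) ℝ, Tendsto γ (𝓝[≠] 0) (𝓝 M) ∧
      ∀ᶠ t in 𝓝[≠] 0, γ t ∈ symplecticGroup (Fin n) ℝ ∧ Good (γ t) := by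
  obtain ⟨x, Y, A, Z, hA, hY, hZ, rfl⟩ := exists_decomp hM
  let At : ℝ → Matrix (Fin n) (Fin n) ℝ := fun t => (1 - t) • A + t • refD n
  have hAc : Continuous At := by fun_prop
  let N : ℝ → Matrix (Fin n ⊕ Fin n) (Fin n ⊕ Fin n) ℝ := fun t =>
    pathN ((1 - t) * x) ((1 - t) • Y) (At t) ((1 - t) • Z)
  have hNc : Continuous N := by
    simp only [N, pathN]
    refine ((Continuous.mul (Continuous.mul ?_ ?_) ?_).mul ?_) <;>
      refine Continuous.matrix_fromBlocks ?_ ?_ ?_ ?_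
    all_goals first
      | fun_prop
      | exact (hAc.matrix_det).smul hAc
      | exact hAc.matrix_adjugate.matrix_transpose
  let P : Polynomial ℝ := rs (pathN ((1 - Polynomial.X) * Polynomial.C x)
    ((1 - Polynomial.X : Polynomial ℝ) • Y.map Polynomial.C)
    ((1 - Polynomial.X : Polynomial ℝ) • A.map Polynomial.C +
      (Polynomial.X : Polynomial ℝ) • (refD n).map Polynomial.C)
    ((1 - Polynomial.X : Polynomial ℝ) • Z.map Polynomial.C))
  have hP : ∀ t, P.eval t = rs (N t) := by
    intro t
    rw [← Polynomial.coe_evalRingHom, ← rs_map, pathN_map]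
    simp only [N, At]
    congr 2
    · simp
    · ext i j; simp
    · ext i j; simp; ring
    · ext i j; simp
  have hP0 : P ≠ 0 := by
    intro h
    have h1 := hP 1
    rw [h, Polynomial.eval_zero] at h1
    apply (good_iff _).1 (good_ref (n := n))
    simpa [N, At] using h1.symm
  have e0 : At 0 = A := by simp [At]
  have hAne : ∀ᶠ t in 𝓝 (0 : ℝ), (At t).det ≠ 0 :=
    hAc.matrix_det.continuousAt.eventually_ne (by rwa [e0])
  have hPne : ∀ᶠ t in 𝓝[≠] (0 : ℝ), P.eval t ≠ 0 := by
    have hfin : {t | P.eval t = 0}.Finite := by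
      refine (P.roots.toFinset.finite_toSet).subset ?_
      intro t ht
      simpa [hP0] using ht
    have : ∀ᶠ t in 𝓝[≠] (0 : ℝ), t ∉ {t | P.eval t = 0} \ {0} := by
      refine nhdsWithin_le_nhds ?_
      exact (hfin.subset Set.sdiff_subset).isClosed.isOpen_compl.mem_nhds (by simp)
    filter_upwards [this, self_mem_nhdsWithin] with t h1 h2 h3
    exact h1 ⟨h3, h2⟩
  refine ⟨fun t => (At t).det⁻¹ • N t, ?_, ?_⟩
  · have : ContinuousAt (fun t => (At t).det⁻¹ • N t) 0 :=
      (hAc.matrix_det.continuousAt.inv₀ (by rwa [e0])).smul hNc.continuousAt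
    have h2 := this.tendsto
    simp only [e0] at h2
    have e1 : A.det⁻¹ • N 0 = pathM x Y A Z := by simp [N, pathM, e0]
    rw [e1] at h2
    exact h2.mono_left nhdsWithin_le_nhds
  · filter_upwards [nhdsWithin_le_nhds hAne, hPne] with t h1 h2
    refine ⟨pathM_mem h1 (by simp [hY]) (by simp [hZ]), ?_⟩
    rw [good_smul_iff (inv_ne_zero h1), good_iff, ← hP]
    exact h2

/-- The index equivalence. -/
def eqv (n : ℕ) : Fin n ⊕ Fin n ≃ Fin (2 * n) :=
  finSumFinEquiv.trans (finCongr (two_mul n).symm)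

theorem stdJ_eq (n : ℕ) : stdJ n = reindex (eqv n) (eqv n) (-(J (Fin n) ℝ)) := by
  apply (reindex (eqv n) (eqv n)).symm.injective
  rw [Equiv.symm_apply_apply]
  ext (i | i) (j | j)
  · have := i.2; have := j.2
    simp [stdJ, eqv, J]
    grind
  · simp [stdJ, eqv, J, Matrix.one_apply, Fin.ext_iff]
    grind
  · simp [stdJ, eqv, J, Matrix.one_apply, Fin.ext_iff]
    grind
  · simp [stdJ, eqv, J]
    grind

theorem mem_iff_sp (M : Matrix (Fin n ⊕ Fin n) (Fin n ⊕ Fin n) ℝ) :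
    (reindex (eqv n) (eqv n) M)ᵀ * stdJ n * reindex (eqv n) (eqv n) M = stdJ n ↔
      M ∈ symplecticGroup (Fin n) ℝ := by
  rw [SymplecticGroup.mem_iff', stdJ_eq]
  have : (reindex (eqv n) (eqv n) M)ᵀ * reindex (eqv n) (eqv n) (-(J (Fin n) ℝ)) *
      reindex (eqv n) (eqv n) M = reindex (eqv n) (eqv n) (-(Mᵀ * J (Fin n) ℝ * M)) := by
    simp only [reindex_apply, transpose_submatrix, submatrix_mul_equiv]
    simp
  rw [this, (reindex (eqv n) (eqv n)).injective.eq_iff, neg_inj]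

theorem good_reindex (M : Matrix (Fin n ⊕ Fin n) (Fin n ⊕ Fin n) ℝ) :
    Good (reindex (eqv n) (eqv n) M) ↔ Good M := by
  unfold Good
  rw [charpoly_reindex]

end


/-- The set of symplectic matrices whose characteristic polynomial has
`2n` pairwise distinct complex roots (no repeated roots over `ℂ`) is open and dense
in `Sp(2n, ℝ)`. -/
theorem stmt9 (n : ℕ) :
    IsOpen {A : SpMat n |
        (((A : Matrix (Fin (2 * n)) (Fin (2 * n)) ℝ).charpoly.map
          (algebraMap ℝ ℂ)).roots).Nodup} ∧
    Dense {A : SpMat n |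
        (((A : Matrix (Fin (2 * n)) (Fin (2 * n)) ℝ).charpoly.map
          (algebraMap ℝ ℂ)).roots).Nodup} := by

  refine ⟨isOpen_good.preimage continuous_subtype_val, ?_⟩
  intro A
  obtain ⟨M, hM⟩ := (reindex (eqv n) (eqv n)).surjective (A : Matrix _ _ ℝ)
  have hMs : M ∈ symplecticGroup (Fin n) ℝ := by
    rw [← mem_iff_sp, hM]
    exact A.2
  obtain ⟨γ, hγ, hev⟩ := exists_path hMs
  rw [closure_subtype]
  have hc : Continuous (fun N : Matrix (Fin n ⊕ Fin n) (Fin n ⊕ Fin n) ℝ =>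
      reindex (eqv n) (eqv n) N) := by
    simp only [reindex_apply]
    fun_prop
  have ht := (hc.tendsto M).comp hγ
  rw [hM] at ht
  refine mem_closure_of_tendsto ht ?_
  filter_upwards [hev] with t h
  exact ⟨⟨_, (mem_iff_sp _).2 h.1⟩, (good_reindex _).2 h.2, rfl⟩
end

section
/- For every n ≥ 1 there exists a matrix A ∈ Sp(2n, ℝ) such that A maps the subspace E = span{e_1, …, e_n} (the span of the first n standard basis vectors of ℝ^{2n}) to itself, and the n×n matrix B representing the restriction of A to E in the basis e_1, …, e_n satisfies: for all subsets I, I' ⊆ {1, …, n} with |I| + |I'| = n, the exterior product (∧^{|I|}B)(e_I) ∧ e_{I'} is nonzero in ∧^n ℝ^n, where e_I denotes the wedge of the basis vectors e_i for i ∈ I in increasing order. -/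
open Matrix

/-- For `I = {i₁ < … < i_k} ⊆ {1, …, n}`, the wedge `e_I = e_{i₁} ∧ … ∧ e_{i_k}` of
standard basis vectors of `ℝⁿ`, as an element of the exterior algebra of `ℝⁿ`
(it lies in the `k`-th exterior power). -/
noncomputable def eWedge (n : ℕ) (I : Finset (Fin n)) :
    ExteriorAlgebra ℝ (Fin n → ℝ) :=
  ((I.sort (· ≤ ·)).map fun i => ExteriorAlgebra.ι ℝ (Pi.single i (1 : ℝ))).prod

lemma aux_cauchy {n : ℕ} (S T : Finset (Fin n)) (hST : S.card ≤ T.card) (w : Fin n → ℝ)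
    (h : ∀ i ∈ T, ∑ k ∈ S, w k * ((k : ℝ) + (i : ℝ) + 1)⁻¹ = 0) : ∀ k ∈ S, w k = 0 := by
  classical
  let P : Polynomial ℝ := ∑ k ∈ S, Polynomial.C (w k) *
    ∏ j ∈ S.erase k, (Polynomial.X + Polynomial.C ((j : ℝ) + 1))
  have hdeg : ∀ k ∈ S, (Polynomial.C (w k) *
      ∏ j ∈ S.erase k, (Polynomial.X + Polynomial.C ((j : ℝ) + 1))).degree < (S.card : WithBot ℕ) := by
    intro k hk
    have hlt : (S.erase k).card < S.card := Finset.card_erase_lt_of_mem hk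
    refine lt_of_le_of_lt ?_ (Nat.cast_lt.mpr hlt)
    rw [← Polynomial.smul_eq_C_mul]
    refine (Polynomial.degree_smul_le _ _).trans ?_
    rw [Polynomial.degree_prod]
    simp only [Polynomial.degree_X_add_C]
    simp
  have hP : P.degree < (S.card : WithBot ℕ) := by
    refine lt_of_le_of_lt (Polynomial.degree_sum_le _ _) ?_
    rw [Finset.sup_lt_iff (WithBot.bot_lt_coe _)]
    exact hdeg
  have hinj : Function.Injective (fun i : Fin n => (i : ℝ)) := by
    intro a b hab
    exact Fin.ext (Nat.cast_injective (R := ℝ) hab)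
  have hP0 : P = 0 := by
    apply Polynomial.eq_zero_of_degree_lt_of_eval_finset_eq_zero (T.image fun i : Fin n => (i : ℝ))
    · rw [Finset.card_image_of_injective _ hinj]
      exact lt_of_lt_of_le hP (Nat.cast_le.mpr hST)
    · intro x hx
      obtain ⟨i, hi, rfl⟩ := Finset.mem_image.mp hx
      have h1 := congrArg (fun z => (∏ j ∈ S, ((i : ℝ) + ((j : ℝ) + 1))) * z) (h i hi)
      simp only [mul_zero] at h1
      rw [← h1, Finset.mul_sum, Polynomial.eval_finsetSum]
      refine Finset.sum_congr rfl fun k hk => ?_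
      rw [← Finset.mul_prod_erase S _ hk]
      simp only [Polynomial.eval_mul, Polynomial.eval_C, Polynomial.eval_prod,
        Polynomial.eval_add, Polynomial.eval_X]
      have : (k : ℝ) + (i : ℝ) + 1 ≠ 0 := by positivity
      field_simp
      ring
  intro k hk
  have h2 : P.eval (-((k : ℝ) + 1)) = 0 := by rw [hP0]; simp
  rw [Polynomial.eval_finsetSum, Finset.sum_eq_single k] at h2
  · simp only [Polynomial.eval_mul, Polynomial.eval_C, Polynomial.eval_prod,
        Polynomial.eval_add, Polynomial.eval_X] at h2
    rcases mul_eq_zero.mp h2 with h3 | h3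
    · exact h3
    · exfalso
      obtain ⟨j, hj, hj0⟩ := Finset.prod_eq_zero_iff.mp h3
      exact (Finset.mem_erase.mp hj).1 (hinj (by simp only; linarith))
  · intro b hb hbk
    simp only [Polynomial.eval_mul, Polynomial.eval_prod,
        Polynomial.eval_add, Polynomial.eval_X, Polynomial.eval_C]
    rw [Finset.prod_eq_zero (Finset.mem_erase.mpr ⟨hbk.symm, hk⟩) (by ring), mul_zero]
  · exact fun hh => absurd hk hh

lemma aux_list {n : ℕ} (l : List (Fin n → ℝ)) (hl : l.length = n)
    (h : ∀ w : Fin n → ℝ, (∀ u ∈ l, u ⬝ᵥ w = 0) → w = 0) :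
    (l.map (ExteriorAlgebra.ι ℝ)).prod ≠ 0 := by
  intro h0
  let v : Fin n → (Fin n → ℝ) := fun i => l.get (i.cast hl.symm)
  have hv : List.ofFn v = l := by
    apply List.ext_get
    · simp [hl]
    · intro i h1 h2
      simp [v]
  have hdet : (Matrix.of v).det ≠ 0 := by
    intro hd
    obtain ⟨w, hw, hw0⟩ := Matrix.exists_mulVec_eq_zero_iff.mpr hd
    apply hw
    apply h
    intro u hu
    rw [← hv, List.mem_ofFn] at hu
    obtain ⟨i, rfl⟩ := hu
    exact congrFun hw0 i
  apply hdet
  have h1 : ExteriorAlgebra.ιMulti ℝ n v = 0 := by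
    rw [ExteriorAlgebra.ιMulti_apply, ← h0, ← hv, List.map_ofFn]
    rfl
  let f : ∀ i, (Fin n → ℝ) [⋀^Fin i]→ₗ[ℝ] ℝ := fun i =>
    if hi : i = n then hi ▸ (Matrix.detRowAlternating : (Fin n → ℝ) [⋀^Fin n]→ₗ[ℝ] ℝ) else 0
  have h2 := ExteriorAlgebra.liftAlternating_apply_ιMulti f v
  rw [h1, map_zero] at h2
  simp only [f, dif_pos] at h2
  exact h2.symm

noncomputable def auxB (n : ℕ) : Matrix (Fin n) (Fin n) ℝ :=
  Matrix.of fun k i => ((k : ℝ) + (i : ℝ) + 1)⁻¹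

lemma auxB_det (n : ℕ) : (auxB n).det ≠ 0 := by
  intro hd
  obtain ⟨w, hw, hw0⟩ := Matrix.exists_vecMul_eq_zero_iff.mpr hd
  apply hw
  funext k
  refine aux_cauchy Finset.univ Finset.univ le_rfl w (fun i _ => ?_) k (Finset.mem_univ _)
  exact congrFun hw0 i

lemma auxB_wedge (n : ℕ) (I I' : Finset (Fin n)) (h : I.card + I'.card = n) :
    ExteriorAlgebra.map (auxB n).mulVecLin (eWedge n I) * eWedge n I' ≠ 0 := by
  classical
  have := aux_list (n := n)
    (((I.sort (· ≤ ·)).map fun i => (auxB n).mulVecLin (Pi.single i (1 : ℝ))) ++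
      ((I'.sort (· ≤ ·)).map fun i => Pi.single i (1 : ℝ))) (by simpa using h) ?_
  · convert this using 1
    simp only [eWedge, List.map_append, List.prod_append, map_list_prod, List.map_map]
    congr 3
    funext i
    exact ExteriorAlgebra.map_apply_ι _ _
  · intro w hw
    have hI' : ∀ i ∈ I', w i = 0 := by
      intro i hi
      have := hw (Pi.single i (1 : ℝ))
        (List.mem_append_right _ (List.mem_map.mpr ⟨i, by simpa using hi, rfl⟩))
      simpa using this
    have hI : ∀ k ∈ I'ᶜ, w k = 0 := by
      refine aux_cauchy I'ᶜ I ?_ w fun i hi => ?_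
      · rw [Finset.card_compl, Fintype.card_fin]; omega
      · have := hw ((auxB n).mulVecLin (Pi.single i (1 : ℝ)))
          (List.mem_append_left _ (List.mem_map.mpr ⟨i, by simpa using hi, rfl⟩))
        rw [Matrix.mulVecLin_apply, Matrix.mulVec_single_one, dotProduct] at this
        rw [← this]
        rw [← Finset.sum_subset (Finset.subset_univ I'ᶜ)]
        · refine Finset.sum_congr rfl fun k _ => ?_
          simp [auxB, mul_comm]
        · intro k _ hk
          rw [hI' k (by simpa using hk), mul_zero]
    funext k
    by_cases hk : k ∈ I'
    · exact hI' k hk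
    · exact hI k (by simpa using hk)

def auxE (n : ℕ) : Fin n ⊕ Fin n ≃ Fin (2 * n) :=
  finSumFinEquiv.trans (finCongr (by omega))

lemma auxE_inl (n : ℕ) (i : Fin n) : ((auxE n (Sum.inl i)) : ℕ) = i := by simp [auxE]
lemma auxE_inr (n : ℕ) (i : Fin n) : ((auxE n (Sum.inr i)) : ℕ) = i + n := by
  simp [auxE]; try omega

lemma stdJ_eq_s12 (n : ℕ) : stdJ n =
    (Matrix.fromBlocks 0 1 (-1) 0 : Matrix (Fin n ⊕ Fin n) (Fin n ⊕ Fin n) ℝ).submatrix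
      (auxE n).symm (auxE n).symm := by
  ext a b
  obtain ⟨a, rfl⟩ := (auxE n).surjective a
  obtain ⟨b, rfl⟩ := (auxE n).surjective b
  rcases a with a | a <;> rcases b with b | b <;>
    simp only [stdJ, Matrix.of_apply, auxE_inl, auxE_inr, Matrix.submatrix_apply,
      Equiv.symm_apply_apply, Matrix.fromBlocks_apply₁₁, Matrix.fromBlocks_apply₁₂,
      Matrix.fromBlocks_apply₂₁, Matrix.fromBlocks_apply₂₂, Matrix.zero_apply, Matrix.neg_apply,
      Matrix.one_apply, Fin.ext_iff] <;>
    have ha := a.isLt <;> have hb := b.isLt <;> split_ifs <;> first | omega | simp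

noncomputable def auxA (n : ℕ) : Matrix (Fin (2 * n)) (Fin (2 * n)) ℝ :=
  (Matrix.fromBlocks (auxB n) 0 0 ((auxB n)⁻¹)ᵀ).submatrix (auxE n).symm (auxE n).symm

lemma auxE_castLE (n : ℕ) (h : n ≤ 2 * n) (i : Fin n) :
    Fin.castLE h i = auxE n (Sum.inl i) := by
  ext; simp [auxE_inl]

/-- For every `n ≥ 1` there is a symplectic matrix `A ∈ Sp(2n, ℝ)`
preserving the subspace `E = span{e_1, …, e_n}` spanned by the first `n` standard
basis vectors, such that the `n × n` matrix `B` representing `A` restricted to `E`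
satisfies the twisting condition: for all `I, I' ⊆ {1, …, n}` with `|I| + |I'| = n`,
the wedge `(∧^{|I|} B)(e_I) ∧ e_{I'}` is nonzero in `∧ⁿ ℝⁿ`. -/
theorem stmt12 (n : ℕ) (hn : 1 ≤ n) :
    ∃ A : Matrix (Fin (2 * n)) (Fin (2 * n)) ℝ,
      Aᵀ * stdJ n * A = stdJ n ∧
      Submodule.map A.mulVecLin
          (Submodule.span ℝ
            (Set.range fun i : Fin n =>
              Pi.single (Fin.castLE (by omega) i) (1 : ℝ))) ≤
        Submodule.span ℝ
          (Set.range fun i : Fin n =>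
            Pi.single (Fin.castLE (by omega) i) (1 : ℝ)) ∧
      ∀ I I' : Finset (Fin n), I.card + I'.card = n →
        ExteriorAlgebra.map
            (A.submatrix (Fin.castLE (by omega : n ≤ 2 * n))
              (Fin.castLE (by omega : n ≤ 2 * n))).mulVecLin
            (eWedge n I) * eWedge n I' ≠ 0 := by
  have hu : IsUnit (auxB n).det := (auxB_det n).isUnit
  refine ⟨auxA n, ?_, ?_, ?_⟩
  · rw [stdJ_eq_s12, auxA, Matrix.transpose_submatrix, Matrix.submatrix_mul_equiv,
      Matrix.submatrix_mul_equiv, Matrix.fromBlocks_transpose, Matrix.fromBlocks_multiply,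
      Matrix.fromBlocks_multiply]
    simp [← Matrix.transpose_mul, Matrix.nonsing_inv_mul _ hu]
  · rw [Submodule.map_span_le]
    rintro _ ⟨i, rfl⟩
    have : (auxA n).mulVecLin (Pi.single (Fin.castLE (by omega) i) (1 : ℝ)) =
        ∑ k : Fin n, auxB n k i • Pi.single (Fin.castLE (by omega) k) (1 : ℝ) := by
      rw [Matrix.mulVecLin_apply, Matrix.mulVec_single_one]
      funext a
      obtain ⟨a, rfl⟩ := (auxE n).surjective a
      rw [Finset.sum_apply]
      simp only [auxE_castLE, Matrix.col_apply, Pi.smul_apply, Pi.single_apply,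
        (auxE n).injective.eq_iff, auxA, Matrix.submatrix_apply, Equiv.symm_apply_apply]
      rcases a with a | a <;> simp
    simp only
    rw [this]
    exact Submodule.sum_mem _ fun k _ => Submodule.smul_mem _ _ (Submodule.subset_span ⟨k, rfl⟩)
  · intro I I' h
    have : (auxA n).submatrix (Fin.castLE (by omega : n ≤ 2 * n))
        (Fin.castLE (by omega : n ≤ 2 * n)) = auxB n := by
      ext a b
      simp [auxA, auxE_castLE]
    rw [this]
    exact auxB_wedge n I I' h
end

section
/- For every n ≥ 1 there exists a matrix B ∈ SL(n, ℝ) all of whose square minors are nonzero: for every k with 1 ≤ k ≤ n and all subsets K, I ⊆ {1, …, n} with |K| = |I| = k, the determinant of the k×k submatrix of B with rows indexed by K and columns indexed by I is nonzero. -/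
open Matrix

lemma cauchy_det_ne_zero {k : ℕ} (x y : Fin k → ℝ) (hx : Function.Injective x)
    (hy : Function.Injective y) (hxy : ∀ i j, x i + y j ≠ 0) :
    (Matrix.of fun i j => (x i + y j)⁻¹ : Matrix (Fin k) (Fin k) ℝ).det ≠ 0 := by
  intro h
  obtain ⟨v, hv, hMv⟩ := Matrix.exists_mulVec_eq_zero_iff.mpr h
  apply hv
  let P : Polynomial ℝ := ∑ j, Polynomial.C (v j) *
    ∏ l ∈ Finset.univ.erase j, (Polynomial.X + Polynomial.C (y l))
  have hroot : ∀ i, P.eval (x i) = 0 := by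
    intro i
    have h1 := congrFun hMv i
    simp only [Matrix.mulVec, dotProduct, Matrix.of_apply, Pi.zero_apply] at h1
    have h2 : P.eval (x i) = (∏ l, (x i + y l)) * ∑ j, (x i + y j)⁻¹ * v j := by
      simp only [P, Polynomial.eval_finsetSum, Polynomial.eval_mul, Polynomial.eval_C,
        Polynomial.eval_prod, Polynomial.eval_add, Polynomial.eval_X, Finset.mul_sum]
      refine Finset.sum_congr rfl fun j _ => ?_
      rw [← Finset.mul_prod_erase Finset.univ _ (Finset.mem_univ j)]
      have := hxy i j
      field_simp
    rw [h2, h1, mul_zero]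
  have hdeg : P.degree < (k : ℕ) := by
    refine lt_of_le_of_lt (Polynomial.degree_sum_le _ _) ?_
    refine (Finset.sup_lt_iff (WithBot.bot_lt_coe k)).mpr ?_
    intro j _
    have h3 : (∏ l ∈ Finset.univ.erase j, (Polynomial.X + Polynomial.C (y l))).degree
        = ((k - 1 : ℕ) : WithBot ℕ) := by
      rw [Polynomial.degree_prod]
      simp [Polynomial.degree_X_add_C, Finset.card_erase_of_mem]
    refine lt_of_le_of_lt (Polynomial.degree_mul_le _ _) ?_
    refine lt_of_le_of_lt (add_le_add_left Polynomial.degree_C_le _) ?_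
    rw [h3, zero_add]
    have := j.pos
    exact WithBot.coe_lt_coe.mpr (by omega : k - 1 < k)
  have hP : P = 0 := by
    refine Polynomial.eq_zero_of_degree_lt_of_eval_index_eq_zero (v := x) (s := Finset.univ)
      hx.injOn (by simpa using hdeg) (fun i _ => hroot i)
  funext j
  have h4 : P.eval (-y j) = v j * ∏ l ∈ Finset.univ.erase j, (-y j + y l) := by
    simp only [P, Polynomial.eval_finsetSum, Polynomial.eval_mul, Polynomial.eval_C,
        Polynomial.eval_prod, Polynomial.eval_add, Polynomial.eval_X]
    refine Finset.sum_eq_single j (fun b _ hb => ?_) (by simp)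
    rw [Finset.prod_eq_zero (i := j) (by simp [hb.symm]) (by simp), mul_zero]
  rw [hP, Polynomial.eval_zero] at h4
  rcases mul_eq_zero.mp h4.symm with h5 | h5
  · exact h5
  · obtain ⟨l, hl, hl'⟩ := Finset.prod_eq_zero_iff.mp h5
    exact absurd (hy (by linarith)) (Finset.ne_of_mem_erase hl)

/-- For every `n ≥ 1` there exists `B ∈ SL(n, ℝ)` all of whose square
minors are nonzero: for every `1 ≤ k ≤ n` and all row/column index sets `K, I` of
cardinality `k`, the determinant of the `k × k` submatrix of `B` with rows `K` and
columns `I` is nonzero. -/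
theorem stmt14 (n : ℕ) (hn : 1 ≤ n) :
    ∃ B : Matrix (Fin n) (Fin n) ℝ, B.det = 1 ∧
      ∀ k : ℕ, 1 ≤ k → k ≤ n → ∀ K I : Finset (Fin n),
        ∀ (hK : K.card = k) (hI : I.card = k),
          (B.submatrix (⇑(K.orderEmbOfFin hK)) (⇑(I.orderEmbOfFin hI))).det ≠ 0 := by
  have key : ∀ (k : ℕ) (f g : Fin k → Fin n), Function.Injective f → Function.Injective g →
      (Matrix.of fun i j => (((f i : ℕ) : ℝ) + (((g j : ℕ) : ℝ) + 1))⁻¹ :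
        Matrix (Fin k) (Fin k) ℝ).det ≠ 0 := by
    intro k f g hf hg
    refine cauchy_det_ne_zero (fun i => ((f i : ℕ) : ℝ)) (fun j => ((g j : ℕ) : ℝ) + 1) ?_ ?_ ?_
    · intro a b hab
      exact hf (Fin.ext (Nat.cast_injective (R := ℝ) hab))
    · intro a b hab
      exact hg (Fin.ext (by simpa using hab))
    · intro i j
      positivity
  let C : Matrix (Fin n) (Fin n) ℝ :=
    Matrix.of fun i j => (((i : ℕ) : ℝ) + (((j : ℕ) : ℝ) + 1))⁻¹
  have hC : C.det ≠ 0 := key n id id Function.injective_id Function.injective_id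
  let d : Fin n → ℝ := fun i => if i = ⟨0, hn⟩ then C.det⁻¹ else 1
  have hd : ∀ i, d i ≠ 0 := by
    intro i
    simp only [d]
    split_ifs
    · exact inv_ne_zero hC
    · exact one_ne_zero
  refine ⟨Matrix.of fun i j => d i * C i j, ?_, ?_⟩
  · rw [Matrix.det_mul_column]
    simp [d, Finset.prod_ite_eq', hC]
  · intro k _ _ K I hK hI
    have := Matrix.det_mul_column (fun i => d (K.orderEmbOfFin hK i))
      (C.submatrix (K.orderEmbOfFin hK) (I.orderEmbOfFin hI))
    refine ne_of_eq_of_ne this (mul_ne_zero (Finset.prod_ne_zero_iff.mpr fun i _ => hd _) ?_)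
    exact key k _ _ (K.orderEmbOfFin hK).injective (I.orderEmbOfFin hI).injective
end
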